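/- Consider the step image f(t₁,t₂) = 1_{{t₂ < 1/2}} with n even, and let j* = ⌈n/2⌉, so pixels (i*, j*) lie just above the edge. There exist a constant p₀ > 0 (independent of n, δ_n, and t_n) and n₀ such that for every pixel (i*, j*), every window size δ_n, every threshold t_n > 0, every t > 0, and every n ≥ n₀, the SNLM weights of the row just below the edge satisfy P( Σ_{m=1}^{n} w^S_{i*,j*}(m, j*−1) − n p₀ < −t ) ≤ 4 δ_n exp( −t²/(4 n δ_n) ). -/

import Mathlib

open MeasureTheory ProbabilityTheory Real Finset Filter

noncomputable section

/-- The pixel grid: indices are taken mod `n` (periodic extension). -/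
abbrev Px (n : ℕ) := ZMod n × ZMod n

/-- The distribution of the i.i.d. `N(0, σ²)` noise array. -/
def noise (n : ℕ) [NeZero n] (σ : ℝ) : Measure (Px n → ℝ) :=
  Measure.pi fun _ => gaussianReal 0 (Real.toNNReal (σ ^ 2))

/-- The Hölder ball `Hölder^α(C)` of functions on `ℝ`. -/
def HolderBall (α C : ℝ) : Set (ℝ → ℝ) :=
  {h | ∀ t t' : ℝ,
    |iteratedDeriv ⌊α⌋₊ h t - iteratedDeriv ⌊α⌋₊ h t'| ≤ C * |t - t'| ^ (α - (⌊α⌋₊ : ℝ))}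

/-- Edge contours of the Horizon class `H^α(C)`. -/
def HorizonFns (α C : ℝ) : Set (ℝ → ℝ) := HolderBall α C ∩ HolderBall 1 1

/-- The Horizon image `f_h(t₁,t₂) = 1_{t₂ < h t₁}`. -/
def horizonImg (h : ℝ → ℝ) (t₁ t₂ : ℝ) : ℝ := if t₂ < h t₁ then 1 else 0

/-- `x_{i,j}`: average of `f` over `Pixel(i,j)`. -/
def pixelAvg (n : ℕ) [NeZero n] (f : ℝ → ℝ → ℝ) (p : Px n) : ℝ :=
  (n : ℝ) ^ 2 * ∫ t₁ in ((p.1.val : ℝ) / n)..(((p.1.val : ℝ) + 1) / n),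
      ∫ t₂ in ((p.2.val : ℝ) / n)..(((p.2.val : ℝ) + 1) / n), f t₁ t₂

/-- The pixel array of the Horizon image `f_h`. -/
def horizonPixels (n : ℕ) [NeZero n] (h : ℝ → ℝ) : Px n → ℝ :=
  pixelAvg n (horizonImg h)

/-- The risk `R_n(f, f̂) = E[(1/n²) Σ (x_{i,j} - f̂_{i,j})²]` of an estimator `est`
which maps observations `y = x + z` to an estimated pixel array. -/
def risk (n : ℕ) [NeZero n] (σ : ℝ) (x : Px n → ℝ)
    (est : (Px n → ℝ) → Px n → ℝ) : ℝ :=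
  ∫ z, (1 / (n : ℝ) ^ 2) * ∑ p : Px n, (x p - est (fun q => x q + z q) p) ^ 2 ∂(noise n σ)


/-- The square window of offsets `{-δ,…,δ}²`. -/
def offsets (δ : ℕ) : Finset (ℤ × ℤ) :=
  Finset.Icc (-(δ : ℤ)) (δ : ℤ) ×ˢ Finset.Icc (-(δ : ℤ)) (δ : ℤ)

/-- Shift a pixel by an integer offset (periodic extension). -/
def shift {n : ℕ} (p : Px n) (o : ℤ × ℤ) : Px n :=
  (p.1 + (o.1 : ZMod n), p.2 + (o.2 : ZMod n))

/-- The `δ`-neighborhood distance `d²_δ(y_p, y_q)` (center element removed),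
normalized by `ρ² = (2δ+1)² - 1`. -/
def nlmDist2 (n : ℕ) (δ : ℕ) (y : Px n → ℝ) (p q : Px n) : ℝ :=
  (1 / (((2 * δ + 1) ^ 2 - 1 : ℕ) : ℝ)) *
    ((∑ o ∈ offsets δ, |y (shift p o) - y (shift q o)| ^ 2) - |y p - y q| ^ 2)

/-- The (hard-thresholded) NLM weight: `1` if `d²_δ(y_p, y_q) ≤ 2σ² + t`, else `0`. -/
def nlmWeight (n : ℕ) (δ : ℕ) (σ t : ℝ) (y : Px n → ℝ) (p q : Px n) : ℝ :=
  if nlmDist2 n δ y p q ≤ 2 * σ ^ 2 + t then 1 else 0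

/-- The NLM estimate at pixel `p` (search over the whole image). -/
def nlmEst (n : ℕ) [NeZero n] (δ : ℕ) (σ t : ℝ) (y : Px n → ℝ) (p : Px n) : ℝ :=
  (∑ q : Px n, nlmWeight n δ σ t y p q * y q) / (∑ q : Px n, nlmWeight n δ σ t y p q)

/-- The semi-oracle `δ`-neighborhood distance `d̄²_δ(y_p, y_q)`: the reference
neighborhood uses the noise-free values `x`, the other the observations `y`. -/
def snlmDist2 (n : ℕ) (δ : ℕ) (x y : Px n → ℝ) (p q : Px n) : ℝ :=
  (1 / (((2 * δ + 1) ^ 2 - 1 : ℕ) : ℝ)) *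
    ((∑ o ∈ offsets δ, |x (shift p o) - y (shift q o)| ^ 2) - (x p - y q) ^ 2)

/-- The semi-oracle NLM weight: `1` if `d̄²_δ(y_p, y_q) ≤ σ² + t`, else `0`. -/
def snlmWeight (n : ℕ) (δ : ℕ) (σ t : ℝ) (x y : Px n → ℝ) (p q : Px n) : ℝ :=
  if snlmDist2 n δ x y p q ≤ σ ^ 2 + t then 1 else 0

/-- The semi-oracle NLM estimate at pixel `p` (search over the whole image). -/
def snlmEst (n : ℕ) [NeZero n] (δ : ℕ) (σ t : ℝ) (x y : Px n → ℝ) (p : Px n) : ℝ :=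
  (∑ q : Px n, snlmWeight n δ σ t x y p q * y q) /
    (∑ q : Px n, snlmWeight n δ σ t x y p q)

/-- The risk of the semi-oracle NLM on the image with pixel array `x`. -/
def snlmRisk (n : ℕ) [NeZero n] (σ : ℝ) (δ : ℕ) (t : ℝ) (x : Px n → ℝ) : ℝ :=
  ∫ z, (1 / (n : ℝ) ^ 2) * ∑ p : Px n,
    (x p - snlmEst n δ σ t x (fun q => x q + z q) p) ^ 2 ∂(noise n σ)

/-- The pixel array of the step image `f(t₁,t₂) = 1_{t₂ < 1/2}` (for `n` even this
is exactly the array of pixel averages): `x_{i,j} = 1` iff `j < n/2`. -/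
def stepX (n : ℕ) : Px n → ℝ := fun p => if 2 * p.2.val < n then 1 else 0

/-- The row index `j* = ⌈n/2⌉` of the pixels just above the edge of the step image. -/
def jstar (n : ℕ) : ZMod n := ((n + 1) / 2 : ℕ)

/-!
The step image makes the noise-free mismatch of two windows centred on either side of the edge
equal to the length of one window row, so it is `O(√N)` for a window of `N` pixels. By the central
limit theorem `∑ zᵢ²` lies below its mean `N σ²` by any fixed multiple of `√N` with probability
bounded below, and the symmetry of the noise under `z ↦ -z` makes the cross term `2 ∑ aᵢ zᵢ`
nonpositive at least half of the time. Hence each weight has mean at least some `c > 0`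
which depends only on `σ`.

Windows whose centres in the row are `2 δ + 1` apart are disjoint, so their weights are independent,
and the sum of all `n` weights is an average of translates of such independent sums. Convexity of
`exp` transfers the Chernoff bound to the whole row. When `δ = 0`, `n p₀ < t` or `n ≤ 2 δ + 1`, the
event is empty or the claimed bound is at least `1`.
-/

section Reindexing

variable {ι E : Type*} [Fintype ι] [MeasurableSpace E] (ν : Measure E) [IsProbabilityMeasure ν]

lemma hasLaw_infinitePi_comp {α : Type*} {f : ι → α} (hf : f.Injective) :
    HasLaw (fun (z : α → E) i ↦ z (f i)) (Measure.pi fun _ ↦ ν) (Measure.infinitePi fun _ ↦ ν) where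
  aemeasurable := (measurable_pi_lambda _ fun i ↦ measurable_pi_apply (f i)).aemeasurable
  map_eq := by
    rw [Measure.map_infinitePi_infinitePi_of_inj (P := fun _ ↦ ν) hf, Measure.infinitePi_eq_pi]

lemma hasLaw_pi_comp {α : Type*} [Fintype α] {f : ι → α} (hf : f.Injective) :
    HasLaw (fun (z : α → E) i ↦ z (f i)) (Measure.pi fun _ ↦ ν) (Measure.pi fun _ ↦ ν) := by
  simpa only [Measure.infinitePi_eq_pi] using hasLaw_infinitePi_comp ν hf

lemma iIndepFun_pi_comp_block {α κ β : Type*} [Fintype α] [Finite κ] [Finite β] {f : κ × β → α}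
    (hf : f.Injective) :
    iIndepFun (fun k (z : α → E) b ↦ z (f (k, b))) (Measure.pi fun _ ↦ ν) := by
  cases nonempty_fintype κ
  cases nonempty_fintype β
  have hblock (k : κ) : HasLaw (fun (z : α → E) b ↦ z (f (k, b))) (Measure.pi fun _ ↦ ν)
      (Measure.pi fun _ ↦ ν) := hasLaw_pi_comp ν (hf.comp (Prod.mk_right_injective k))
  have hcurry := Measure.infinitePi_map_curry (ι := κ) (κ := β) fun _ _ ↦ ν
  simp only [Measure.infinitePi_eq_pi, ← (hasLaw_pi_comp ν hf).map_eq] at hcurry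
  rw [iIndepFun_iff_map_fun_eq_pi_map fun k ↦ (hblock k).aemeasurable]
  simp only [(hblock _).map_eq]
  rw [← hcurry, Measure.map_map (MeasurableEquiv.measurable _) (by fun_prop)]
  rfl

end Reindexing

section CentralLimit

variable {Ω E : Type*} [MeasurableSpace Ω] [MeasurableSpace E]

theorem exists_eventually_le_measureReal_sum_add_sqrt_le {P : Measure Ω} [IsProbabilityMeasure P]
    {X : ℕ → Ω → ℝ} (hX : MemLp (X 0) 2 P) (hvar : Var[X 0; P] ≠ 0) (hindep : iIndepFun X P)
    (hident : ∀ i, IdentDistrib (X i) (X 0) P P) (b : ℝ) :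
    ∃ p : ℝ, 0 < p ∧ ∀ᶠ N : ℕ in atTop,
      p ≤ P.real {ω | ∑ k ∈ range N, X k ω + b * √N ≤ N * P[X 0]} := by
  set v : NNReal := Var[X 0; P].toNNReal
  have hv : v ≠ 0 := by
    simpa [v] using (variance_nonneg (X 0) P).lt_of_ne' hvar
  have : (gaussianReal 0 v).IsOpenPosMeasure :=
    (gaussianReal_absolutelyContinuous' 0 hv).isOpenPosMeasure
  have hclt := tendstoInDistribution_inv_sqrt_mul_sum_sub HasLaw.id hX hindep hident
  have hliminf := ProbabilityMeasure.le_liminf_measure_open_of_tendsto hclt.tendsto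
    (isOpen_Iio (a := -b))
  simp only [ProbabilityMeasure.coe_mk, Measure.map_id] at hliminf
  obtain ⟨c, hc, hc_lt⟩ := exists_between
    (isOpen_Iio.measure_pos (gaussianReal 0 v) (Set.nonempty_Iio (a := -b)))
  refine ⟨c.toReal, ENNReal.toReal_pos hc.ne' hc_lt.ne_top, ?_⟩
  filter_upwards [eventually_lt_of_lt_liminf (hc_lt.trans_le hliminf), eventually_gt_atTop 0]
    with N hN hN_pos
  have hmeas (k : ℕ) : AEMeasurable (X k) P := (hident k).aemeasurable_fst
  rw [Measure.map_apply_of_aemeasurable (by fun_prop) measurableSet_Iio] at hN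
  refine ENNReal.toReal_mono (measure_ne_top _ _) (hN.le.trans (measure_mono fun ω hω ↦ ?_))
  have hlt := (inv_mul_lt_iff₀ (Real.sqrt_pos.2 (Nat.cast_pos.2 hN_pos))).1 hω
  simp only [Set.mem_ofPred_eq]
  linarith

theorem exists_le_measureReal_pi_sum_add_sqrt_le {ν : Measure E} [IsProbabilityMeasure ν]
    {f : E → ℝ} (hf : Measurable f) (hf2 : MemLp f 2 ν) (hvar : Var[f; ν] ≠ 0) (b : ℝ) :
    ∃ p : ℝ, 0 < p ∧ ∃ N₀ : ℕ, ∀ (ι : Type*) [Fintype ι], N₀ ≤ Fintype.card ι →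
      p ≤ (Measure.pi fun _ : ι ↦ ν).real
        {z | ∑ i, f (z i) + b * √(Fintype.card ι) ≤ Fintype.card ι * ∫ x, f x ∂ν} := by
  let P : Measure (ℕ → E) := Measure.infinitePi fun _ ↦ ν
  have hident (k : ℕ) : IdentDistrib (fun ω : ℕ → E ↦ f (ω k)) f P ν :=
    (HasLaw.identDistrib ⟨(measurable_pi_apply k).aemeasurable, Measure.infinitePi_map_eval _ k⟩
      HasLaw.id).comp hf
  have hindep : iIndepFun (fun k (ω : ℕ → E) ↦ f (ω k)) P :=
    iIndepFun_infinitePi (P := fun _ : ℕ ↦ ν) (X := fun _ ↦ f) fun _ ↦ hf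
  obtain ⟨p, hp, hp_le⟩ := exists_eventually_le_measureReal_sum_add_sqrt_le (P := P)
    (X := fun k ω ↦ f (ω k)) ((hident 0).memLp_iff.2 hf2) ((hident 0).variance_eq.trans_ne hvar)
    hindep (fun k ↦ (hident k).trans (hident 0).symm) b
  obtain ⟨N₀, hN₀⟩ := eventually_atTop.1 hp_le
  refine ⟨p, hp, N₀, fun ι _ hι ↦ (hN₀ _ hι).trans_eq ?_⟩
  let e := Fintype.equivFin ι
  have hlaw := hasLaw_infinitePi_comp ν (Fin.val_injective.comp e.injective)
  rw [← hlaw.measureReal_eq (measurableSet_le (by fun_prop) (by fun_prop)), (hident 0).integral_eq]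
  congr! 5 with ω
  rw [← Fin.sum_univ_eq_sum_range (fun k ↦ f (ω k))]
  exact (e.sum_comp fun k ↦ f (ω k)).symm

end CentralLimit

section Gaussian

variable {v : NNReal}

instance isNegInvariant_gaussianReal : (gaussianReal 0 v).IsNegInvariant :=
  ⟨gaussianReal_map_neg.trans (by rw [neg_zero])⟩

lemma integral_sq_gaussianReal : ∫ x, x ^ 2 ∂gaussianReal 0 v = v := by
  simpa [variance_eq_integral measurable_id'.aemeasurable] using
    variance_fun_id_gaussianReal (μ := 0) (v := v)

lemma memLp_sq_gaussianReal (μ : ℝ) : MemLp (fun x ↦ x ^ 2) 2 (gaussianReal μ v) := by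
  have h := (memLp_id_gaussianReal' (μ := μ) (v := v) 4 (by simp)).integrable_norm_pow (by simp)
  rw [memLp_two_iff_integrable_sq (by fun_prop)]
  simpa [← pow_mul, Even.pow_abs (show Even 4 by decide)] using h

lemma variance_sq_gaussianReal_ne_zero (hv : v ≠ 0) :
    Var[fun x ↦ x ^ 2; gaussianReal 0 v] ≠ 0 := by
  intro hvar
  have : (gaussianReal 0 v).IsOpenPosMeasure :=
    (gaussianReal_absolutelyContinuous' 0 hv).isOpenPosMeasure
  have hconst : (fun x : ℝ ↦ x ^ 2) = fun _ ↦ (v : ℝ) :=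
    ((continuous_pow 2).ae_eq_iff_eq _ continuous_const).1 <|
      integral_sq_gaussianReal (v := v) ▸
        ae_eq_integral_of_variance_eq_zero (memLp_sq_gaussianReal 0) hvar
  exact hv (by simpa using (congrFun hconst 0).symm)

lemma exists_pos_le_gaussianReal_sq_add_le (hv : v ≠ 0) (M : ℝ) :
    ∃ c : ℝ, 0 < c ∧ ∀ b : ℝ, b ^ 2 ≤ M → c ≤ (gaussianReal 0 v).real {x | (x + b) ^ 2 ≤ v} := by
  have hv' : (0 : ℝ) < v := by positivity
  set m : ℝ := (√(2 * π * v))⁻¹ * rexp (-(2 * v + 2 * M) / (2 * v))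
  refine ⟨m * (2 * √v), by positivity, fun b hb ↦ ?_⟩
  have hball : {x : ℝ | (x + b) ^ 2 ≤ v} = Metric.closedBall (-b) √v := by
    ext x
    rw [Metric.mem_closedBall, Real.dist_eq, sub_neg_eq_add, Set.mem_ofPred_eq,
      ← Real.sqrt_sq_eq_abs, Real.sqrt_le_sqrt_iff hv'.le]
  have hpdf : ∀ x ∈ {x : ℝ | (x + b) ^ 2 ≤ v}, m ≤ gaussianPDFReal 0 v x := by
    intro x hx
    simp only [gaussianPDFReal, m, sub_zero]
    gcongr
    nlinarith [sq_nonneg (x + 2 * b), hx.out]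
  rw [measureReal_def, gaussianReal_apply_eq_integral _ hv,
    ENNReal.toReal_ofReal (integral_nonneg fun _ ↦ gaussianPDFReal_nonneg _ _ _)]
  calc m * (2 * √v) = ∫ _ in {x : ℝ | (x + b) ^ 2 ≤ v}, m := by
        rw [setIntegral_const, hball, measureReal_def, Real.volume_closedBall,
          ENNReal.toReal_ofReal (by positivity), smul_eq_mul, mul_comm]
    _ ≤ ∫ x in {x : ℝ | (x + b) ^ 2 ≤ v}, gaussianPDFReal 0 v x :=
        setIntegral_mono_on
          (by rw [hball]; exact integrableOn_const measure_closedBall_lt_top.ne)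
          (integrable_gaussianPDFReal 0 v).integrableOn
          (measurableSet_le (by fun_prop) (by fun_prop)) hpdf

end Gaussian

section NoncentralChiSquare

variable {ι : Type*} [Fintype ι]

/- For every `z`, one of `z` and `-z` makes the cross term of `∑ i, (z i + a i) ^ 2` nonpositive. -/
lemma measureReal_sum_sq_add_sum_sq_le (μ : Measure (ι → ℝ)) [IsFiniteMeasure μ] [μ.IsNegInvariant]
    (a : ι → ℝ) (r : ℝ) :
    μ.real {z | ∑ i, z i ^ 2 + ∑ i, a i ^ 2 ≤ r} ≤ 2 * μ.real {z | ∑ i, (z i + a i) ^ 2 ≤ r} := by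
  set B : Set (ι → ℝ) := {z | ∑ i, (z i + a i) ^ 2 ≤ r}
  have hcover : {z : ι → ℝ | ∑ i, z i ^ 2 + ∑ i, a i ^ 2 ≤ r} ⊆ B ∪ -B := by
    intro z hz
    have hexpand (s : ℝ) : ∑ i, (s * z i + a i) ^ 2 =
        s ^ 2 * ∑ i, z i ^ 2 + ∑ i, a i ^ 2 + 2 * s * ∑ i, z i * a i := by
      simp only [mul_sum, ← sum_add_distrib]
      exact sum_congr rfl fun i _ ↦ by ring
    have hpos := hexpand 1
    have hneg := hexpand (-1)
    simp only [one_mul, neg_one_mul] at hpos hneg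
    simp only [B, Set.mem_union, Set.mem_neg, Set.mem_ofPred_eq, Pi.neg_apply, hpos, hneg] at hz ⊢
    rcases le_total (∑ i, z i * a i) 0 with h | h
    · left; linarith
    · right; linarith
  calc μ.real {z | ∑ i, z i ^ 2 + ∑ i, a i ^ 2 ≤ r} ≤ μ.real (B ∪ -B) := measureReal_mono hcover
    _ ≤ μ.real B + μ.real (-B) := measureReal_union_le _ _
    _ = 2 * μ.real B := by
        rw [measureReal_def μ (-B), Measure.measure_neg, ← measureReal_def, two_mul]

variable {v : NNReal}

lemma prod_le_gaussianReal_pi_sum_sq_add_le {a : ι → ℝ} {c : ℝ} (hc : 0 ≤ c)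
    (h : ∀ i, c ≤ (gaussianReal 0 v).real {x | (x + a i) ^ 2 ≤ v}) :
    c ^ Fintype.card ι ≤ (Measure.pi fun _ : ι ↦ gaussianReal 0 v).real
      {z | ∑ i, (z i + a i) ^ 2 ≤ Fintype.card ι * v} := by
  calc c ^ Fintype.card ι = ∏ _i : ι, c := by simp
    _ ≤ ∏ i, (gaussianReal 0 v).real {x | (x + a i) ^ 2 ≤ v} := by gcongr with i; exact h i
    _ = (Measure.pi fun _ : ι ↦ gaussianReal 0 v).real
        (Set.univ.pi fun i ↦ {x | (x + a i) ^ 2 ≤ v}) := by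
      simp only [measureReal_def, Measure.pi_pi, ENNReal.toReal_prod]
    _ ≤ _ := measureReal_mono fun z hz ↦ by
        simpa using
          sum_le_card_nsmul univ (fun i ↦ (z i + a i) ^ 2) v fun i _ ↦ hz i (Set.mem_univ i)

theorem exists_pos_le_gaussianReal_pi_sum_sq_add_le (hv : v ≠ 0) (K : ℝ) :
    ∃ p : ℝ, 0 < p ∧ ∀ (ι : Type*) [Fintype ι] (a : ι → ℝ),
      ∑ i, a i ^ 2 ≤ K * √(Fintype.card ι) →
        p ≤ (Measure.pi fun _ : ι ↦ gaussianReal 0 v).real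
          {z | ∑ i, (z i + a i) ^ 2 ≤ Fintype.card ι * v} := by
  obtain ⟨p, hp, N₀, hlarge⟩ := exists_le_measureReal_pi_sum_add_sqrt_le
    (measurable_id.pow_const 2) (memLp_sq_gaussianReal 0) (variance_sq_gaussianReal_ne_zero hv) K
  obtain ⟨c, hc, hsmall⟩ := exists_pos_le_gaussianReal_sq_add_le hv (|K| * √N₀)
  refine ⟨min (p / 2) (min c 1 ^ N₀), by positivity, fun ι _ a ha ↦ ?_⟩
  rcases le_total N₀ (Fintype.card ι) with hcard | hcard
  · have hsum : p ≤ (Measure.pi fun _ : ι ↦ gaussianReal 0 v).real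
        {z | ∑ i, z i ^ 2 + ∑ i, a i ^ 2 ≤ Fintype.card ι * v} := by
      refine (hlarge ι hcard).trans (measureReal_mono fun z hz ↦ ?_)
      simp only [id, integral_sq_gaussianReal, Set.mem_ofPred_eq] at hz ⊢
      linarith
    have := hsum.trans (measureReal_sum_sq_add_sum_sq_le _ a _)
    exact (min_le_left _ _).trans (by linarith)
  · have ha_sq (i : ι) : a i ^ 2 ≤ |K| * √N₀ :=
      calc a i ^ 2 ≤ ∑ i, a i ^ 2 := single_le_sum (fun j _ ↦ sq_nonneg (a j)) (mem_univ i)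
        _ ≤ K * √(Fintype.card ι) := ha
        _ ≤ |K| * √N₀ := by gcongr; exact le_abs_self K
    refine (min_le_right _ _).trans <| (pow_le_pow_of_le_one (by positivity) (min_le_right _ _)
      hcard).trans <| prod_le_gaussianReal_pi_sum_sq_add_le (by positivity) fun i ↦ ?_
    exact (min_le_left _ _).trans (hsmall (a i) (ha_sq i))

end NoncentralChiSquare

section Concentration

lemma exp_neg_le_one_sub_half {w : ℝ} (hw : w ∈ Set.Icc 0 1) : rexp (-w) ≤ 1 - w / 2 := by
  obtain ⟨hw0, hw1⟩ := hw
  rw [Real.exp_neg, inv_le_iff_one_le_mul₀ (exp_pos w)]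
  nlinarith [Real.add_one_le_exp w]

variable {Ω : Type*} [MeasurableSpace Ω] {P : Measure Ω} [IsProbabilityMeasure P]

lemma integrable_exp_neg_mul_of_nonneg {X : Ω → ℝ} (hX : Measurable X) (hX0 : ∀ ω, 0 ≤ X ω)
    {s : ℝ} (hs : 0 ≤ s) : Integrable (fun ω ↦ rexp (-s * X ω)) P := by
  refine .of_mem_Icc 0 1 (by fun_prop) (ae_of_all _ fun ω ↦ ⟨(exp_pos _).le, ?_⟩)
  rw [Real.exp_le_one_iff, neg_mul, neg_nonpos]
  exact mul_nonneg hs (hX0 ω)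

lemma mgf_neg_one_le_exp_neg_integral_div_two {W : Ω → ℝ} (hW : Measurable W)
    (hW01 : ∀ ω, W ω ∈ Set.Icc 0 1) : mgf W P (-1) ≤ rexp (-(P[W] / 2)) := by
  have hint : Integrable W P := .of_mem_Icc 0 1 hW.aemeasurable (ae_of_all _ hW01)
  calc mgf W P (-1) ≤ ∫ ω, (1 - W ω / 2) ∂P :=
        integral_mono_of_nonneg (ae_of_all _ fun ω ↦ (exp_pos _).le) (by fun_prop) <|
          ae_of_all _ fun ω ↦ by simpa using exp_neg_le_one_sub_half (hW01 ω)
    _ = 1 - P[W] / 2 := by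
        rw [integral_sub (integrable_const 1) (hint.div_const 2), integral_div]
        simp
    _ ≤ rexp (-(P[W] / 2)) := one_sub_le_exp_neg _

variable {G ι : Type*} [AddGroup G] [Fintype G] [Fintype ι]

lemma sum_sum_add_right_eq_card_mul_sum (f : G → ℝ) (c : ι → G) :
    ∑ g, ∑ k, f (g + c k) = Fintype.card ι * ∑ g, f g := by
  have htranslate (k : ι) : ∑ g, f (g + c k) = ∑ g, f g := Equiv.sum_comp (Equiv.addRight (c k)) f
  simp [sum_comm, htranslate]

/- Hoeffding's averaging device: `∑ g, f g` is proportional to the average over `g` of the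
translated sums `∑ k, f (g + c k)`, and `exp` is convex. -/
lemma exp_neg_mul_sum_le_sum_exp_neg_sum_translate (f : G → ℝ) (c : ι → G) :
    rexp (-(Fintype.card ι / Fintype.card G) * ∑ g, f g) ≤
      ∑ g, (Fintype.card G : ℝ)⁻¹ * rexp (-∑ k, f (g + c k)) := by
  have hG : (Fintype.card G : ℝ) ≠ 0 := Nat.cast_ne_zero.2 Fintype.card_ne_zero
  have h := convexOn_exp.map_sum_le (t := univ) (w := fun _ : G ↦ (Fintype.card G : ℝ)⁻¹)
    (p := fun g ↦ -∑ k, f (g + c k)) (by simp) (by simp [hG]) (by simp)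
  simp only [smul_eq_mul, ← mul_sum, sum_neg_distrib, sum_sum_add_right_eq_card_mul_sum] at h ⊢
  refine h.trans_eq' ?_
  congr 1
  ring

lemma mgf_sum_le_of_forall_mgf_sum_translate_le {W : G → Ω → ℝ} (hW : ∀ g, Measurable (W g))
    (hW0 : ∀ g ω, 0 ≤ W g ω) (c : ι → G) {B : ℝ}
    (hB : ∀ g, mgf (∑ k, W (g + c k)) P (-1) ≤ B) :
    mgf (∑ g, W g) P (-(Fintype.card ι / Fintype.card G)) ≤ B := by
  have hG : (0 : ℝ) < Fintype.card G := Nat.cast_pos.2 Fintype.card_pos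
  set S : G → Ω → ℝ := fun g ↦ ∑ k, W (g + c k)
  have hS0 (g : G) (ω : Ω) : 0 ≤ S g ω := by
    simpa [S] using sum_nonneg fun k _ ↦ hW0 (g + c k) ω
  have hSint (g : G) : Integrable (fun ω ↦ rexp (-1 * S g ω)) P := by
    exact integrable_exp_neg_mul_of_nonneg (by fun_prop) (hS0 g) zero_le_one
  have hconvex (ω : Ω) : rexp (-(Fintype.card ι / Fintype.card G) * (∑ g, W g) ω) ≤
      ∑ g, (Fintype.card G : ℝ)⁻¹ * rexp (-1 * S g ω) := by
    simpa [S] using exp_neg_mul_sum_le_sum_exp_neg_sum_translate (fun g ↦ W g ω) c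
  calc mgf (∑ g, W g) P (-(Fintype.card ι / Fintype.card G))
      ≤ ∫ ω, ∑ g, (Fintype.card G : ℝ)⁻¹ * rexp (-1 * S g ω) ∂P :=
        integral_mono_of_nonneg (ae_of_all _ fun ω ↦ (exp_pos _).le)
          (integrable_finsetSum _ fun g _ ↦ (hSint g).const_mul _) (ae_of_all _ hconvex)
    _ = ∑ g, (Fintype.card G : ℝ)⁻¹ * mgf (S g) P (-1) := by
        rw [integral_finsetSum _ fun g _ ↦ (hSint g).const_mul _]
        simp only [integral_const_mul, mgf]
    _ ≤ ∑ _g : G, (Fintype.card G : ℝ)⁻¹ * B := by gcongr with g; exact hB g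
    _ = B := by simp [hG.ne']

theorem measureReal_sum_le_exp_of_iIndepFun_translate {W : G → Ω → ℝ} (hW : ∀ g, Measurable (W g))
    (hW01 : ∀ g ω, W g ω ∈ Set.Icc 0 1) {p : ℝ} (hp : ∀ g, p ≤ P[W g]) (c : ι → G)
    (hindep : ∀ g, iIndepFun (fun k ↦ W (g + c k)) P) (a : ℝ) :
    P.real {ω | ∑ g, W g ω ≤ a} ≤
      rexp (Fintype.card ι * (a / Fintype.card G - p / 2)) := by
  have htranslate (g : G) : mgf (∑ k, W (g + c k)) P (-1) ≤ rexp (-(Fintype.card ι * (p / 2))) :=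
    calc mgf (∑ k, W (g + c k)) P (-1) = ∏ k, mgf (W (g + c k)) P (-1) :=
          (hindep g).mgf_sum (fun k ↦ hW (g + c k)) univ
      _ ≤ ∏ _k : ι, rexp (-(p / 2)) := by
          refine prod_le_prod (fun k _ ↦ mgf_nonneg) fun k _ ↦ ?_
          refine (mgf_neg_one_le_exp_neg_integral_div_two (hW _) (hW01 _)).trans ?_
          gcongr
          exact hp _
      _ = rexp (-(Fintype.card ι * (p / 2))) := by simp [← Real.exp_nat_mul]
  have hmgf := mgf_sum_le_of_forall_mgf_sum_translate_le hW (fun g ω ↦ (hW01 g ω).1) c htranslate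
  set s : ℝ := Fintype.card ι / Fintype.card G
  have hs : 0 ≤ s := by positivity
  have hint : Integrable (fun ω ↦ rexp (-s * (∑ g, W g) ω)) P := by
    refine integrable_exp_neg_mul_of_nonneg (by fun_prop) (fun ω ↦ ?_) hs
    simpa using sum_nonneg fun g _ ↦ (hW01 g ω).1
  calc P.real {ω | ∑ g, W g ω ≤ a} ≤ rexp (-(-s) * a) * mgf (∑ g, W g) P (-s) := by
        simpa using measure_le_le_exp_mul_mgf a (neg_nonpos.2 hs) hint
    _ ≤ rexp (-(-s) * a) * rexp (-(Fintype.card ι * (p / 2))) := by gcongr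
    _ = rexp (Fintype.card ι * (a / Fintype.card G - p / 2)) := by
        rw [← Real.exp_add]
        congr 1
        ring

end Concentration

section Threshold

variable {κ : Type*} [Fintype κ]

/-- The hard-threshold weight of a window `κ` whose noise-free mismatch with the reference window is
`a` and whose noise is `w`: it is `1` if the mean squared distance is at most `τ`, else `0`. -/
def thresholdWeight (τ : ℝ) (a w : κ → ℝ) : ℝ :=
  if (∑ o, (w o + a o) ^ 2) / Fintype.card κ ≤ τ then 1 else 0

lemma thresholdWeight_mem_Icc (τ : ℝ) (a w : κ → ℝ) : thresholdWeight τ a w ∈ Set.Icc 0 1 := by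
  unfold thresholdWeight
  split_ifs <;> simp

@[fun_prop]
lemma measurable_thresholdWeight (τ : ℝ) (a : κ → ℝ) : Measurable (thresholdWeight τ a) :=
  Measurable.ite (measurableSet_le (by fun_prop) measurable_const) measurable_const measurable_const

theorem exists_pos_le_integral_thresholdWeight {v : NNReal} (hv : v ≠ 0) (K : ℝ) :
    ∃ p : ℝ, 0 < p ∧ ∀ (κ : Type*) [Fintype κ] (τ : ℝ) (a : κ → ℝ), v ≤ τ →
      ∑ o, a o ^ 2 ≤ K * √(Fintype.card κ) →
        p ≤ ∫ w, thresholdWeight τ a w ∂Measure.pi fun _ ↦ gaussianReal 0 v := by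
  obtain ⟨p, hp, hp_le⟩ := exists_pos_le_gaussianReal_pi_sum_sq_add_le hv K
  refine ⟨p, hp, fun κ _ τ a hτ ha ↦ (hp_le κ a ha).trans ?_⟩
  have hmeas : MeasurableSet {w : κ → ℝ | ∑ o, (w o + a o) ^ 2 ≤ Fintype.card κ * v} :=
    measurableSet_le (by fun_prop) measurable_const
  rw [← integral_indicator_one hmeas]
  refine integral_mono ((integrable_const 1).indicator hmeas)
    (.of_mem_Icc 0 1 (by fun_prop) (ae_of_all _ (thresholdWeight_mem_Icc τ a)))
    (Set.indicator_le' (fun w hw ↦ ?_) fun w _ ↦ (thresholdWeight_mem_Icc τ a w).1)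
  refine (if_pos (div_le_of_le_mul₀ (by positivity) (v.2.trans hτ) (hw.trans ?_))).ge
  rw [mul_comm]
  gcongr

end Threshold

section Windows

/-- The offsets of the `δ`-window with its centre removed. -/
def puncturedOffsets (δ : ℕ) : Finset (ℤ × ℤ) := (offsets δ).erase 0

variable {n δ : ℕ}

lemma card_puncturedOffsets (δ : ℕ) : #(puncturedOffsets δ) = (2 * δ + 1) ^ 2 - 1 := by
  have hside : ((δ : ℤ) + 1 + δ).toNat = 2 * δ + 1 := by omega
  rw [puncturedOffsets, card_erase_of_mem (by simp [offsets])]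
  simp [offsets, hside, sq]

lemma cast_card_puncturedOffsets (δ : ℕ) : (#(puncturedOffsets δ) : ℝ) = 4 * δ * (δ + 1) := by
  have hsq : (2 * δ + 1) ^ 2 - 1 = 4 * δ * (δ + 1) := Nat.sub_eq_of_eq_add (by ring)
  simp [card_puncturedOffsets, hsq]

lemma snlmDist2_eq_sum_puncturedOffsets_div (x y : Px n → ℝ) (p q : Px n) :
    snlmDist2 n δ x y p q =
      (∑ o ∈ puncturedOffsets δ, (x (shift p o) - y (shift q o)) ^ 2) / #(puncturedOffsets δ) := by
  have hshift (r : Px n) : shift r 0 = r := by simp [shift]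
  rw [snlmDist2, ← add_sum_erase _ _ (show (0 : ℤ × ℤ) ∈ offsets δ by simp [offsets]),
    card_puncturedOffsets, one_div_mul_eq_div]
  simp only [sq_abs, hshift, add_sub_cancel_left, puncturedOffsets]

lemma snlmWeight_add_noise (σ t : ℝ) (x z : Px n → ℝ) (p q : Px n) :
    snlmWeight n δ σ t x (fun r ↦ x r + z r) p q =
      thresholdWeight (σ ^ 2 + t)
        (fun o : puncturedOffsets δ ↦ x (shift q o) - x (shift p o)) (fun o ↦ z (shift q o)) := by
  rw [snlmWeight, thresholdWeight, snlmDist2_eq_sum_puncturedOffsets_div, Fintype.card_coe,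
    ← sum_coe_sort]
  congr! 4 with o
  ring

lemma snlmWeight_zero_window {t : ℝ} (ht : 0 ≤ t) (σ : ℝ) (x y : Px n → ℝ) (p q : Px n) :
    snlmWeight n 0 σ t x y p q = 1 := by
  have : 0 ≤ σ ^ 2 + t := by positivity
  simpa [snlmWeight, snlmDist2]

lemma sum_sq_sub_le_of_snlmDist2_le {K : ℝ} {x : Px n → ℝ} {p q : Px n}
    (hd : snlmDist2 n δ x x p q ≤ K / δ) :
    ∑ o ∈ puncturedOffsets δ, (x (shift p o) - x (shift q o)) ^ 2 ≤
      4 * |K| * √(#(puncturedOffsets δ)) := by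
  rcases Nat.eq_zero_or_pos δ with rfl | hδ
  · simp [card_eq_zero.1 (card_puncturedOffsets 0)]
  have hcard := cast_card_puncturedOffsets δ
  have hδ' : (1 : ℝ) ≤ δ := Nat.one_le_cast.2 hδ
  have hsqrt : (δ : ℝ) + 1 ≤ √(#(puncturedOffsets δ)) :=
    Real.le_sqrt_of_sq_le (by rw [hcard]; nlinarith)
  rw [snlmDist2_eq_sum_puncturedOffsets_div, div_le_div_iff₀ (by rw [hcard]; positivity)
    (by positivity), hcard] at hd
  calc _ ≤ 4 * K * (δ + 1) := le_of_mul_le_mul_right (by linarith) (show (0 : ℝ) < δ by positivity)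
    _ ≤ 4 * |K| * √(#(puncturedOffsets δ)) := by gcongr; exact le_abs_self K

lemma eq_of_intCast_zmod_eq {a b : ℤ} (hab : |b - a| < n) (h : (a : ZMod n) = b) : a = b :=
  (sub_eq_zero.1 (Int.eq_zero_of_abs_lt_dvd ((ZMod.intCast_eq_intCast_iff_dvd_sub a b n).1 h)
    hab)).symm

lemma abs_le_of_mem_puncturedOffsets {o : ℤ × ℤ} (ho : o ∈ puncturedOffsets δ) :
    |o.1| ≤ δ ∧ |o.2| ≤ δ := by
  simpa [offsets, abs_le] using mem_of_mem_erase ho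

lemma injective_shift_translates {q : ℕ} (hq : q * (2 * δ + 1) ≤ n) (m j : ZMod n) :
    (fun c : Fin q × puncturedOffsets δ ↦
      shift (m + (((c.1 : ℕ) * (2 * δ + 1) : ℤ) : ZMod n), j) c.2).Injective := by
  rintro ⟨k, o⟩ ⟨k', o'⟩ h
  simp only [shift, Prod.mk.injEq, add_right_inj, add_assoc, ← Int.cast_add] at h
  have ho := abs_le_of_mem_puncturedOffsets o.2
  have ho' := abs_le_of_mem_puncturedOffsets o'.2
  simp only [abs_le] at ho ho'
  have hk : (k : ℤ) + 1 ≤ q := by omega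
  have hk' : (k' : ℤ) + 1 ≤ q := by omega
  zify at hq
  have hfst : (k : ℤ) * (2 * δ + 1) + o.1.1 = k' * (2 * δ + 1) + o'.1.1 := by
    refine eq_of_intCast_zmod_eq (n := n) ?_ h.1
    rw [abs_lt]
    constructor <;> nlinarith
  have hsnd : o.1.2 = o'.1.2 := by
    refine eq_of_intCast_zmod_eq (n := n) ?_ h.2
    rw [abs_lt]
    constructor <;> nlinarith
  have hfst_o : o'.1.1 = o.1.1 := by
    refine sub_eq_zero.1 (Int.eq_zero_of_abs_lt_dvd (m := 2 * δ + 1) ⟨k - k', by linarith⟩ ?_)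
    rw [abs_lt]
    omega
  have hk_eq : (k : ℤ) = k' :=
    mul_right_cancel₀ (b := 2 * (δ : ℤ) + 1) (by positivity) (by linarith)
  exact Prod.ext (Fin.ext (by exact_mod_cast hk_eq)) (Subtype.ext (Prod.ext hfst_o.symm hsnd))

lemma injective_shift_puncturedOffsets (hn : 2 * δ + 1 ≤ n) (q : Px n) :
    (fun o : puncturedOffsets δ ↦ shift q o).Injective := by
  simpa [Function.comp_def] using
    (injective_shift_translates (δ := δ) (q := 1) (by omega) q.1 q.2).comp
      (Prod.mk_right_injective 0)

end Windows

section RowOfWeights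

variable {n δ : ℕ} {σ : ℝ}

lemma snlmWeight_mem_Icc (t : ℝ) (x y : Px n → ℝ) (p q : Px n) :
    snlmWeight n δ σ t x y p q ∈ Set.Icc 0 1 := by
  unfold snlmWeight
  split_ifs <;> simp

lemma measurable_snlmWeight_add_noise (t : ℝ) (x : Px n → ℝ) (p q : Px n) :
    Measurable fun z : Px n → ℝ ↦ snlmWeight n δ σ t x (fun r ↦ x r + z r) p q := by
  simp only [snlmWeight_add_noise]
  fun_prop

variable [NeZero n]

instance isProbabilityMeasure_noise : IsProbabilityMeasure (noise n σ) := by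
  unfold noise
  infer_instance

lemma iIndepFun_snlmWeight_translates {q : ℕ} (hq : q * (2 * δ + 1) ≤ n) (t : ℝ) (x : Px n → ℝ)
    (p : Px n) (m j : ZMod n) :
    iIndepFun (fun (k : Fin q) (z : Px n → ℝ) ↦ snlmWeight n δ σ t x (fun r ↦ x r + z r) p
      (m + (((k : ℕ) * (2 * δ + 1) : ℤ) : ZMod n), j)) (noise n σ) := by
  simp only [snlmWeight_add_noise]
  exact (iIndepFun_pi_comp_block _ (injective_shift_translates hq m j)).comp
    (fun k ↦ thresholdWeight (σ ^ 2 + t) fun o : puncturedOffsets δ ↦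
      x (shift (m + (((k : ℕ) * (2 * δ + 1) : ℤ) : ZMod n), j) o) - x (shift p o))
    fun k ↦ measurable_thresholdWeight _ _

lemma measureReal_sum_snlmWeight_le {q : ℕ} (hq : q * (2 * δ + 1) ≤ n) {t : ℝ} {x : Px n → ℝ}
    {p : Px n} {j : ZMod n} {c : ℝ}
    (hc : ∀ m, c ≤ ∫ z, snlmWeight n δ σ t x (fun r ↦ x r + z r) p (m, j) ∂noise n σ) (a : ℝ) :
    (noise n σ).real {z | ∑ m, snlmWeight n δ σ t x (fun r ↦ x r + z r) p (m, j) ≤ a} ≤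
      rexp (q * (a / n - c / 2)) := by
  simpa using measureReal_sum_le_exp_of_iIndepFun_translate
    (fun m ↦ measurable_snlmWeight_add_noise t x p (m, j))
    (fun m z ↦ snlmWeight_mem_Icc t x _ p (m, j)) hc
    (fun k : Fin q ↦ (((k : ℕ) * (2 * δ + 1) : ℤ) : ZMod n))
    (fun m ↦ iIndepFun_snlmWeight_translates hq t x p m j) a

lemma integral_snlmWeight_add_noise (hn : 2 * δ + 1 ≤ n) (t : ℝ) (x : Px n → ℝ) (p q : Px n) :
    ∫ z, snlmWeight n δ σ t x (fun r ↦ x r + z r) p q ∂noise n σ =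
      ∫ w, thresholdWeight (σ ^ 2 + t)
        (fun o : puncturedOffsets δ ↦ x (shift q o) - x (shift p o)) w
        ∂Measure.pi fun _ ↦ gaussianReal 0 (Real.toNNReal (σ ^ 2)) := by
  simp only [snlmWeight_add_noise]
  exact (hasLaw_pi_comp _ (injective_shift_puncturedOffsets hn q)).integral_comp
    (measurable_thresholdWeight _ _).aestronglyMeasurable

theorem exists_pos_le_integral_snlmWeight (hσ : 0 < σ) (K : ℝ) :
    ∃ c : ℝ, 0 < c ∧ ∀ (n : ℕ) [NeZero n] (δ : ℕ), 2 * δ + 1 ≤ n → ∀ (t : ℝ), 0 ≤ t →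
      ∀ (x : Px n → ℝ) (p q : Px n), snlmDist2 n δ x x p q ≤ K / δ →
        c ≤ ∫ z, snlmWeight n δ σ t x (fun r ↦ x r + z r) p q ∂noise n σ := by
  obtain ⟨c, hc, hc_le⟩ := exists_pos_le_integral_thresholdWeight
    (v := Real.toNNReal (σ ^ 2)) (by positivity) (4 * |K|)
  refine ⟨c, hc, fun n _ δ hn t ht x p q hd ↦ ?_⟩
  rw [integral_snlmWeight_add_noise hn]
  refine hc_le _ _ _ ?_ ?_
  · rw [Real.coe_toNNReal _ (sq_nonneg σ)]
    linarith
  · rw [Fintype.card_coe, sum_coe_sort _ fun o ↦ (x (shift q o) - x (shift p o)) ^ 2]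
    simpa only [sub_sq_comm] using sum_sq_sub_le_of_snlmDist2_le hd

end RowOfWeights

section TailBound

lemma sq_div_le_mul_div {n δ p t : ℝ} (hn : 0 < n) (hδ : 0 < δ) (hp : p ≤ 1 / 4) (ht : 0 ≤ t)
    (htp : t ≤ n * p) : t ^ 2 / (4 * n * δ) ≤ n * p / (16 * δ) := by
  have hp0 : 0 ≤ p := nonneg_of_mul_nonneg_right (ht.trans htp) hn
  calc t ^ 2 / (4 * n * δ) ≤ (n * p) ^ 2 / (4 * n * δ) := by gcongr
    _ = n * p * p / (4 * δ) := by field_simp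
    _ ≤ n * p * (1 / 4) / (4 * δ) := by gcongr
    _ = n * p / (16 * δ) := by ring

lemma one_le_mul_exp_of_le_window {n δ : ℕ} {p t : ℝ} (hn : 0 < n) (hδ : 0 < δ)
    (hnδ : n ≤ 2 * δ + 1) (hp : p ≤ 1 / 4) (ht : 0 ≤ t) (htp : t ≤ n * p) :
    1 ≤ 4 * δ * rexp (-t ^ 2 / (4 * n * δ)) := by
  have hδ1 : (1 : ℝ) ≤ δ := Nat.one_le_cast.2 hδ
  have hn' : (n : ℝ) ≤ 2 * δ + 1 := by exact_mod_cast hnδ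
  have hsmall : t ^ 2 / (4 * n * δ) ≤ 1 / 2 :=
    calc t ^ 2 / (4 * n * δ) ≤ n * p / (16 * δ) :=
          sq_div_le_mul_div (by positivity) (by positivity) hp ht htp
      _ ≤ n * (1 / 4) / (16 * δ) := by gcongr
      _ ≤ 1 / 2 := by
          rw [div_le_div_iff₀ (by positivity) two_pos]
          linarith
  have hexp : 1 / 2 ≤ rexp (-t ^ 2 / (4 * n * δ)) := by
    rw [neg_div]
    linarith [one_sub_le_exp_neg (t ^ 2 / (4 * n * δ))]
  nlinarith

variable {n δ : ℕ} {σ : ℝ} [NeZero n]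

theorem measureReal_sum_snlmWeight_sub_lt_le (hδ : 0 < δ) (hn : 2 * δ + 1 < n) {tn : ℝ}
    {x : Px n → ℝ} {p : Px n} {j : ZMod n} {p₀ t : ℝ} (hp₀ : p₀ ≤ 1 / 4) (ht : 0 ≤ t)
    (htp : t ≤ n * p₀)
    (hmean : ∀ m, 4 * p₀ ≤
      ∫ z, snlmWeight n δ σ tn x (fun r ↦ x r + z r) p (m, j) ∂noise n σ) :
    (noise n σ).real {z | ∑ m, snlmWeight n δ σ tn x (fun r ↦ x r + z r) p (m, j) - n * p₀ < -t} ≤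
      rexp (-t ^ 2 / (4 * n * δ)) := by
  have hn0 : (0 : ℝ) < n := Nat.cast_pos.2 (by omega)
  have hp0 : 0 ≤ p₀ := nonneg_of_mul_nonneg_right (ht.trans htp) hn0
  set q : ℕ := n / (2 * δ + 1)
  have hn_le : n ≤ 6 * q * δ := by
    have hlt : n < (2 * δ + 1) * (q + 1) := Nat.lt_mul_div_succ n (Nat.succ_pos (2 * δ))
    have hq : 1 ≤ q := Nat.div_pos hn.le (by omega)
    nlinarith
  have hexponent : t ^ 2 / (4 * n * δ) ≤ q * p₀ :=
    calc t ^ 2 / (4 * n * δ) ≤ n * p₀ / (16 * δ) :=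
          sq_div_le_mul_div hn0 (by positivity) hp₀ ht htp
      _ ≤ (6 * q * δ : ℕ) * p₀ / (16 * δ) := by gcongr
      _ = 3 / 8 * (q * p₀) := by
          push_cast
          field_simp
          ring
      _ ≤ q * p₀ := by linarith [mul_nonneg (Nat.cast_nonneg (α := ℝ) q) hp0]
  calc _ ≤ (noise n σ).real
        {z | ∑ m, snlmWeight n δ σ tn x (fun r ↦ x r + z r) p (m, j) ≤ n * p₀} :=
        measureReal_mono fun z hz ↦ sub_nonpos.1 (hz.out.le.trans (neg_nonpos.2 ht))
    _ ≤ rexp (q * (n * p₀ / n - 4 * p₀ / 2)) :=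
        measureReal_sum_snlmWeight_le (Nat.div_mul_le_self n (2 * δ + 1)) hmean _
    _ = rexp (-(q * p₀)) := by
        rw [mul_div_cancel_left₀ _ hn0.ne']
        ring_nf
    _ ≤ rexp (-t ^ 2 / (4 * n * δ)) := by
        rw [neg_div]
        gcongr

end TailBound

section Step

lemma stepX_jstar_add {n : ℕ} [NeZero n] {c : ℤ} (hc : -(n : ℤ) ≤ 2 * c) (hc' : 2 * c + 1 < n)
    (i : ZMod n) : stepX n (i, jstar n + c) = if c < 0 then 1 else 0 := by
  have hval : (((jstar n + c : ZMod n).val : ℕ) : ℤ) = ((n + 1) / 2 : ℕ) + c := by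
    rw [jstar, ← Int.cast_natCast ((n + 1) / 2), ← Int.cast_add, ZMod.val_intCast]
    exact Int.emod_eq_of_lt (by omega) (by omega)
  exact if_congr (by dsimp only; omega) rfl rfl

lemma snlmDist2_stepX_le {n δ : ℕ} [NeZero n] (hn : 2 * δ + 1 < n) (i m : ZMod n) :
    snlmDist2 n δ (stepX n) (stepX n) (i, jstar n) (m, jstar n - 1) ≤ 1 / δ := by
  rcases Nat.eq_zero_or_pos δ with rfl | hδ
  · simp [snlmDist2]
  have hmismatch : ∀ o ∈ offsets δ,
      (stepX n (shift (i, jstar n) o) - stepX n (shift (m, jstar n - 1) o)) ^ 2 =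
        if o.2 = 0 then 1 else 0 := by
    intro o ho
    simp only [offsets, mem_product, mem_Icc] at ho
    have hbelow : jstar n - 1 + (o.2 : ZMod n) = jstar n + ((o.2 - 1 : ℤ) : ZMod n) := by
      push_cast
      ring
    simp only [shift, hbelow]
    rw [stepX_jstar_add (by omega) (by omega), stepX_jstar_add (by omega) (by omega)]
    rcases lt_trichotomy o.2 0 with h | h | h
    · simp [h, h.ne, show o.2 < 1 by omega]
    · simp [h]
    · simp [h.ne', h.not_gt, show ¬ o.2 < 1 by omega]
  rw [snlmDist2_eq_sum_puncturedOffsets_div, cast_card_puncturedOffsets,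
    div_le_div_iff₀ (by positivity) (by positivity)]
  have hsum : ∑ o ∈ puncturedOffsets δ,
      (stepX n (shift (i, jstar n) o) - stepX n (shift (m, jstar n - 1) o)) ^ 2 ≤ 2 * δ + 1 :=
    calc _ ≤ ∑ o ∈ offsets δ, _ :=
          sum_le_sum_of_subset_of_nonneg (erase_subset _ _) fun _ _ _ ↦ sq_nonneg _
      _ = ∑ o ∈ offsets δ, if o.2 = 0 then 1 else 0 := sum_congr rfl hmismatch
      _ = 2 * δ + 1 := by
        have hside : ((δ : ℤ) + 1 + δ).toNat = 2 * δ + 1 := by omega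
        rw [offsets, sum_product]
        simp [hside]
  nlinarith

end Step

theorem snlm_below_edge_weights_general {σ : ℝ} (hσ : 0 < σ) (K : ℝ) :
    ∃ p₀ : ℝ, 0 < p₀ ∧ ∀ (n : ℕ) [NeZero n] (δ : ℕ) (tn : ℝ), 0 ≤ tn →
      ∀ (x : Px n → ℝ) (p : Px n) (j : ZMod n),
        (2 * δ + 1 < n → ∀ m, snlmDist2 n δ x x p (m, j) ≤ K / δ) → ∀ t : ℝ, 0 ≤ t →
          (noise n σ).real {z | ∑ m, snlmWeight n δ σ tn x (fun q ↦ x q + z q) p (m, j)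
            - n * p₀ < -t} ≤ 4 * δ * rexp (-t ^ 2 / (4 * n * δ)) := by
  obtain ⟨c, hc, hc_le⟩ := exists_pos_le_integral_snlmWeight hσ K
  obtain ⟨p₀, hp₀, hp₀_le_c, hp₀_le⟩ : ∃ p₀ : ℝ, 0 < p₀ ∧ 4 * p₀ ≤ c ∧ p₀ ≤ 1 / 4 :=
    ⟨min c 1 / 4, by positivity, by linarith [min_le_left c 1], by linarith [min_le_right c 1]⟩
  refine ⟨p₀, hp₀, fun n _ δ tn htn x p j hd t ht ↦ ?_⟩
  rcases lt_or_ge (n * p₀) t with htp | htp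
  · have hempty := Set.eq_empty_of_forall_notMem
      (s := {z : Px n → ℝ | ∑ m, snlmWeight n δ σ tn x (fun q ↦ x q + z q) p (m, j)
        - n * p₀ < -t}) fun z hz ↦ by
        linarith [hz.out, sum_nonneg fun m (_ : m ∈ univ) ↦
          (snlmWeight_mem_Icc (δ := δ) (σ := σ) tn x (fun q ↦ x q + z q) p (m, j)).1]
    simp only [hempty, measureReal_empty]
    positivity
  rcases Nat.eq_zero_or_pos δ with rfl | hδ
  · have hsub : n * p₀ ≤ (n : ℝ) := mul_le_of_le_one_right (by positivity) (by linarith)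
    have hempty : {_z : Px n → ℝ | n - n * p₀ < -t} = ∅ :=
      Set.eq_empty_of_forall_notMem fun _ hz ↦ by linarith [hz.out]
    simp [snlmWeight_zero_window htn, hempty]
  rcases le_or_gt n (2 * δ + 1) with hn | hn
  · exact measureReal_le_one.trans
      (one_le_mul_exp_of_le_window (Nat.pos_of_neZero n) hδ hn hp₀_le ht htp)
  refine (measureReal_sum_snlmWeight_sub_lt_le hδ hn hp₀_le ht htp fun m ↦ ?_).trans
    (le_mul_of_one_le_left (exp_pos _).le ?_)
  · linarith [hc_le n δ hn.le tn htn x p (m, j) (hd hn m)]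
  · have : (1 : ℝ) ≤ δ := Nat.one_le_cast.2 hδ
    linarith

/-- Proposition 1: for the step image `1_{t₂<1/2}` with `n` even,
there is a constant `p₀ > 0`, independent of `n`, `δ_n` and `t_n`, such that the
SNLM weights of the row just below the edge satisfy, for every `t > 0`,
`P(Σ_m w^S_{i*,j*}(m, j*-1) - n p₀ < -t) ≤ 4 δ_n exp(-t²/(4 n δ_n))`. -/
theorem snlm_below_edge_weights (σ : ℝ) (hσ : 0 < σ) :
    ∃ p₀ : ℝ, 0 < p₀ ∧ ∃ n₀ : ℕ, ∀ (n : ℕ) [NeZero n], n₀ ≤ n → Even n →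
      ∀ (δ : ℕ) (tn : ℝ), 0 < tn → ∀ (i : ZMod n) (t : ℝ), 0 < t →
        ((noise n σ)
          {z | (∑ m : ZMod n,
              snlmWeight n δ σ tn (stepX n) (fun q => stepX n q + z q)
                (i, jstar n) (m, jstar n - 1)) - n * p₀ < -t}).toReal ≤
        4 * δ * Real.exp (-t ^ 2 / (4 * n * δ)) := by
  obtain ⟨p₀, hp₀, h⟩ := snlm_below_edge_weights_general hσ 1
  exact ⟨p₀, hp₀, 0, fun n _ _ _ δ tn htn i t ht ↦ h n δ tn htn.le (stepX n) (i, jstar n)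
    (jstar n - 1) (fun hn m ↦ snlmDist2_stepX_le hn i m) t ht.le⟩
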